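/- Let m ≥ 1, k ≥ 3 and r ≥ 1 be integers, let ε > 0 be real, and let t be an integer with t ≥ k·√m/ε. Let Δ = {0,1,…,k−1}^m ⊆ ℤ^m and A_r = { v_0 + t·v_1 + … + t^{r−1}·v_{r−1} : v_0,…,v_{r−1} ∈ Δ }. If 0 < α < 1 is a real number with α > ((k^m − 1)/k^m)^r, then every X ⊆ A_r with |X| ≥ α·|A_r| contains a C_ε(m,k). -/

import Mathlib

/-- The family `x v ∈ ℤ^m`, indexed by `v ∈ {0,…,k−1}^m`, is an ε-approximate cube
`C_ε(m,k)`. -/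
def IsCubeEps (ε : ℝ) (m k : ℕ) (x : (Fin m → ℕ) → (Fin m → ℤ)) : Prop :=
  ∃ (a : Fin m → ℝ) (d : ℝ), 0 < d ∧ ∀ v : Fin m → ℕ, (∀ j, v j < k) →
    Real.sqrt (∑ j : Fin m, ((x v j : ℝ) - (a j + d * (v j : ℝ))) ^ 2) < ε * d

/-- The finite set `A ⊆ ℤ^m` contains an ε-approximate cube `C_ε(m,k)`. -/
def FinsetContainsCube (ε : ℝ) (m k : ℕ) (A : Finset (Fin m → ℤ)) : Prop :=
  ∃ x : (Fin m → ℕ) → (Fin m → ℤ),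
    (∀ v : Fin m → ℕ, (∀ j, v j < k) → x v ∈ A) ∧ IsCubeEps ε m k x

/-!
Suppose that `X` contains no approximate cube. Among any `k ^ m` small windows placed around the
points of a dilated grid `a + d • {0, …, k - 1} ^ m`, at least one must then avoid `X`. If a set `S`
splits into disjoint pieces on each of which `X` has density at most `b`, and one piece is a window
avoiding `X` with at least `|S| / k ^ m` elements, then `X` has density at most
`b * (1 - 1 / k ^ m)` on `S`. Iterating `r` times gives
`|X ∩ A_r| ≤ (1 - 1 / k ^ m) ^ r * |A_r|`.

For `k ≤ t` the pieces of `A_{s + 1}` are its `k ^ m` disjoint translates of `A_s`. For `t < k`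
these translates overlap, but then `A_r` consists of the lattice points of a box, which is cut
repeatedly into `t ^ m` congruent cells. The tolerance `k / t` times the mesh `t * ℓ / k` of the
grid is the side `ℓ` of a cell, so each grid point can take the cell containing it as its window. At
the last scale, where the side lengths lie between `k` and `2 * k`, the grid has mesh one and the
windows have side one or two. For `t = 1` the tolerance is so large that a single point is a cube.
-/

section Counting

variable {α ι : Type*} [DecidableEq α] {X S W : Finset α} {K : ℝ}

lemma card_sdiff_le_mul_card (hK : 0 < K) (hW : W ⊆ S) (hcard : (S.card : ℝ) ≤ K * W.card) :
    ((S \ W).card : ℝ) ≤ (K - 1) / K * S.card := by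
  rw [Finset.cast_card_sdiff hW, div_mul_eq_mul_div, le_div_iff₀ hK]
  linarith

lemma card_inter_biUnion_le {I : Finset ι} {P : ι → Finset α} {b : ℝ} {i₀ : ι}
    (hP : (I : Set ι).PairwiseDisjoint P) (hb : 0 ≤ b) (hK : 0 < K)
    (hdensity : ∀ i ∈ I, ((X ∩ P i).card : ℝ) ≤ b * (P i).card)
    (hi₀ : i₀ ∈ I) (havoid : Disjoint X (P i₀))
    (hcard : ((I.biUnion P).card : ℝ) ≤ K * (P i₀).card) :
    ((X ∩ I.biUnion P).card : ℝ) ≤ b * ((K - 1) / K) * (I.biUnion P).card := by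
  classical
  have hsub : P i₀ ⊆ I.biUnion P := Finset.subset_biUnion_of_mem P hi₀
  have hsum : ∑ i ∈ I, ((P i).card : ℝ) = (I.biUnion P).card := by
    rw [Finset.card_biUnion hP, Nat.cast_sum]
  calc ((X ∩ I.biUnion P).card : ℝ)
      ≤ ∑ i ∈ I, ((X ∩ P i).card : ℝ) := by
        rw [Finset.inter_biUnion]
        exact_mod_cast Finset.card_biUnion_le
    _ = ∑ i ∈ I.erase i₀, ((X ∩ P i).card : ℝ) := by
        rw [← Finset.add_sum_erase _ _ hi₀, Finset.disjoint_iff_inter_eq_empty.1 havoid,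
          Finset.card_empty, Nat.cast_zero, zero_add]
    _ ≤ ∑ i ∈ I.erase i₀, b * ((P i).card : ℝ) :=
        Finset.sum_le_sum fun i hi ↦ hdensity i (Finset.mem_of_mem_erase hi)
    _ = b * ((I.biUnion P \ P i₀).card : ℝ) := by
        rw [← Finset.mul_sum, Finset.sum_erase_eq_sub hi₀, hsum, Finset.cast_card_sdiff hsub]
    _ ≤ b * ((K - 1) / K * (I.biUnion P).card) := by
        gcongr
        exact card_sdiff_le_mul_card hK hsub hcard
    _ = b * ((K - 1) / K) * (I.biUnion P).card := by ring

lemma card_piFinset_le_pow_mul {κ : ι → Type*} [Fintype ι] [DecidableEq ι] {k : ℕ}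
    {f g : (i : ι) → Finset (κ i)} (h : ∀ i, (f i).card ≤ k * (g i).card) :
    (Fintype.piFinset f).card ≤ k ^ Fintype.card ι * (Fintype.piFinset g).card := by
  simp only [Fintype.card_piFinset]
  calc ∏ i, (f i).card ≤ ∏ i, k * (g i).card := Finset.prod_le_prod' fun i _ ↦ h i
    _ = k ^ Fintype.card ι * ∏ i, (g i).card := by
      rw [Finset.prod_mul_distrib, Finset.prod_const, Finset.card_univ]

end Counting

section CubeFree

variable {m k : ℕ} {ε δ d : ℝ} {a : Fin m → ℝ} {X : Finset (Fin m → ℤ)}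

lemma isCubeEps_of_forall_abs_lt {x : (Fin m → ℕ) → Fin m → ℤ} (hm : 1 ≤ m) (hδ : √m * δ ≤ ε)
    (hd : 0 < d)
    (hx : ∀ v : Fin m → ℕ, (∀ j, v j < k) → ∀ j, |(x v j : ℝ) - (a j + d * v j)| < δ * d) :
    IsCubeEps ε m k x := by
  refine ⟨a, d, hd, fun v hv ↦ ?_⟩
  have : Nonempty (Fin m) := ⟨⟨0, hm⟩⟩
  have hδd : 0 < δ * d := (abs_nonneg _).trans_lt (hx v hv ⟨0, hm⟩)
  calc √(∑ j, ((x v j : ℝ) - (a j + d * v j)) ^ 2)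
      < √(∑ _j : Fin m, (δ * d) ^ 2) := by
        refine Real.sqrt_lt_sqrt (Finset.sum_nonneg fun _ _ ↦ sq_nonneg _) ?_
        refine Finset.sum_lt_sum_of_nonempty Finset.univ_nonempty fun j _ ↦ ?_
        exact sq_lt_sq' (abs_lt.1 (hx v hv j)).1 (abs_lt.1 (hx v hv j)).2
    _ = √m * δ * d := by
        rw [Finset.sum_const, Finset.card_univ, Fintype.card_fin, nsmul_eq_mul,
          Real.sqrt_mul m.cast_nonneg, Real.sqrt_sq hδd.le, mul_assoc]
    _ ≤ ε * d := by gcongr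

lemma exists_disjoint_of_not_containsCube (hm : 1 ≤ m) (hδ : √m * δ ≤ ε)
    (hX : ¬ FinsetContainsCube ε m k X) (hd : 0 < d) (W : (Fin m → Fin k) → Finset (Fin m → ℤ))
    (hW : ∀ v, ∀ x ∈ W v, ∀ j, |(x j : ℝ) - (a j + d * (v j : ℕ))| < δ * d) :
    ∃ v, Disjoint X (W v) := by
  by_contra! hmeet
  simp only [Finset.not_disjoint_iff] at hmeet
  choose y hyX hyW using hmeet
  let x (v : Fin m → ℕ) : Fin m → ℤ := if hv : ∀ j, v j < k then y fun j ↦ ⟨v j, hv j⟩ else 0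
  have hx {v : Fin m → ℕ} (hv : ∀ j, v j < k) : x v = y fun j ↦ ⟨v j, hv j⟩ := dif_pos hv
  refine hX ⟨x, fun v hv ↦ hx hv ▸ hyX _,
    isCubeEps_of_forall_abs_lt (a := a) hm hδ hd fun v hv j ↦ ?_⟩
  rw [hx hv]
  exact hW _ _ (hyW _) j

lemma containsCube_of_nonempty (hm : 1 ≤ m) (hε : √m * k ≤ ε) (hX : X.Nonempty) :
    FinsetContainsCube ε m k X := by
  obtain ⟨x, hx⟩ := hX
  refine ⟨fun _ ↦ x, fun _ _ ↦ hx, isCubeEps_of_forall_abs_lt (a := fun j ↦ x j) (d := 1) hm hε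
    one_pos fun v hv j ↦ ?_⟩
  simpa using hv j

end CubeFree

section Blowup

open scoped Pointwise

/-- The iterated blow-up `A_r = {v₀ + t v₁ + ⋯ + t ^ (r - 1) v_{r - 1}}`, with `vᵢ` in the discrete
cube `{0, …, k - 1} ^ m`. -/
def blowup (m k t r : ℕ) : Finset (Fin m → ℤ) :=
  Finset.univ.image fun (v : Fin r → Fin m → Fin k) j ↦ ∑ i : Fin r, (t : ℤ) ^ (i : ℕ) * (v i j : ℤ)

/-- The largest coordinate of a point of `blowup m k t r`, namely the number all of whose `r` digits
in base `t` are `k - 1`. -/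
def blowupWidth (k t r : ℕ) : ℤ :=
  (k - 1) * ∑ i ∈ Finset.range r, (t : ℤ) ^ i

variable {m k t r : ℕ}

lemma blowupWidth_succ : blowupWidth k t (r + 1) = blowupWidth k t r + (k - 1) * t ^ r := by
  simp only [blowupWidth, Finset.sum_range_succ, mul_add]

lemma pow_le_blowupWidth_add_one (htk : t ≤ k) : (t : ℤ) ^ r ≤ blowupWidth k t r + 1 := by
  rw [← sub_le_iff_le_add, ← mul_geom_sum, blowupWidth]
  gcongr

lemma blowupWidth_lt_pow (hkt : k ≤ t) : blowupWidth k t r < t ^ r := by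
  rw [← sub_add_cancel ((t : ℤ) ^ r) 1, Int.lt_add_one_iff, ← mul_geom_sum, blowupWidth]
  gcongr

lemma mul_blowupWidth_lt (hk : 1 ≤ k) (hkt : k ≤ t) : t * blowupWidth k t r < k * t ^ r := by
  have hgeom := mul_geom_sum (t : ℤ) r
  have hmul : (t : ℤ) * (k - 1) ≤ k * (t - 1) := by
    have : (k : ℤ) ≤ t := mod_cast hkt
    linarith
  calc t * blowupWidth k t r = t * (k - 1) * ∑ i ∈ Finset.range r, (t : ℤ) ^ i := by
        rw [blowupWidth, mul_assoc]
    _ ≤ k * (t - 1) * ∑ i ∈ Finset.range r, (t : ℤ) ^ i := by gcongr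
    _ = k * (t ^ r - 1) := by rw [mul_assoc, hgeom]
    _ < k * t ^ r := by gcongr; omega

lemma mul_pow_le_blowupWidth_succ (htk : t ≤ k) :
    (k : ℤ) * t ^ r ≤ blowupWidth k t (r + 1) + 1 := by
  rw [blowupWidth_succ]
  linarith [pow_le_blowupWidth_add_one (r := r) htk]

lemma blowupWidth_succ_add_one_le (hk : 1 ≤ k) (ht : 2 ≤ t) :
    blowupWidth k t (r + 1) + 1 ≤ 2 * k * t ^ r := by
  have hgeom : ∑ i ∈ Finset.range r, (t : ℤ) ^ i < t ^ r :=
    mod_cast Nat.geomSum_lt ht fun _ ↦ Finset.mem_range.1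
  have hk₁ : 0 ≤ (k : ℤ) - 1 := sub_nonneg.2 (mod_cast hk)
  have hpow : (1 : ℤ) ≤ t ^ r := one_le_pow₀ (by omega)
  calc blowupWidth k t (r + 1) + 1
      = (k - 1) * (∑ i ∈ Finset.range r, (t : ℤ) ^ i) + (k - 1) * t ^ r + 1 := by
        rw [blowupWidth_succ, blowupWidth]
    _ ≤ (k - 1) * t ^ r + (k - 1) * t ^ r + t ^ r := by gcongr
    _ ≤ 2 * k * t ^ r := by linarith

lemma blowup_nonempty (hk : 1 ≤ k) : (blowup m k t r).Nonempty :=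
  ⟨_, Finset.mem_image_of_mem _ (Finset.mem_univ fun _ _ ↦ ⟨0, hk⟩)⟩

lemma blowup_zero : blowup m k t 0 = {0} := by
  ext x
  simp [blowup, funext_iff]

lemma blowup_succ : blowup m k t (r + 1) =
    Finset.univ.biUnion fun v : Fin m → Fin k ↦
      (fun j ↦ (t : ℤ) ^ r * (v j : ℤ)) +ᵥ blowup m k t r := by
  ext x
  simp only [blowup, Finset.mem_image, Finset.mem_univ, true_and, Finset.mem_biUnion,
    Finset.mem_vadd_finset]
  constructor
  · rintro ⟨v, rfl⟩
    refine ⟨v (Fin.last r), _, ⟨Fin.init v, rfl⟩, funext fun j ↦ ?_⟩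
    simp [Fin.sum_univ_castSucc, Fin.init, add_comm]
  · rintro ⟨w, _, ⟨v, rfl⟩, rfl⟩
    refine ⟨Fin.snoc v w, funext fun j ↦ ?_⟩
    simp [Fin.sum_univ_castSucc, add_comm]

lemma blowup_subset_Icc : blowup m k t r ⊆ Finset.Icc 0 fun _ ↦ blowupWidth k t r := by
  induction r with
  | zero => simp [blowup_zero, blowupWidth, Pi.le_def]
  | succ r ih =>
    intro x hx
    simp only [blowup_succ, Finset.mem_biUnion, Finset.mem_univ, true_and,
      Finset.mem_vadd_finset] at hx
    obtain ⟨v, y, hy, rfl⟩ := hx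
    obtain ⟨hy₀, hy₁⟩ := Finset.mem_Icc.1 (ih hy)
    refine Finset.mem_Icc.2 ⟨fun j ↦ ?_, fun j ↦ ?_⟩
    · exact add_nonneg (by positivity) (hy₀ j)
    · have hv : ((v j : ℕ) : ℤ) ≤ k - 1 := by omega
      have hmul : (t : ℤ) ^ r * (v j : ℕ) ≤ t ^ r * (k - 1) := by gcongr
      simp only [vadd_eq_add, Pi.add_apply, blowupWidth_succ]
      linarith [hy₁ j]

lemma exists_digit (hk : 1 ≤ k) (ht : 1 ≤ t) (htk : t ≤ k) {x : ℤ} (hx₀ : 0 ≤ x)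
    (hx₁ : x ≤ blowupWidth k t (r + 1)) :
    ∃ c : Fin k, 0 ≤ x - t ^ r * (c : ℕ) ∧ x - t ^ r * (c : ℕ) ≤ blowupWidth k t r := by
  have hpow : (0 : ℤ) < t ^ r := by positivity
  rw [blowupWidth_succ] at hx₁
  have hdiv := Int.ediv_nonneg hx₀ hpow.le
  rcases lt_or_ge (x / t ^ r) k with hlt | hge
  · refine ⟨⟨(x / t ^ r).toNat, by omega⟩, ?_⟩
    rw [Int.toNat_of_nonneg hdiv, ← Int.emod_def]
    have := Int.emod_lt_of_pos x hpow
    exact ⟨Int.emod_nonneg x hpow.ne', by linarith [pow_le_blowupWidth_add_one (r := r) htk]⟩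
  · refine ⟨⟨k - 1, by omega⟩, ?_⟩
    rw [Int.le_ediv_iff_mul_le hpow] at hge
    push_cast [Nat.cast_sub hk]
    constructor <;> linarith

lemma blowup_eq_Icc (ht : 1 ≤ t) (htk : t ≤ k) :
    blowup m k t r = Finset.Icc 0 fun _ ↦ blowupWidth k t r := by
  refine blowup_subset_Icc.antisymm ?_
  induction r with
  | zero =>
    have hIcc : Finset.Icc (0 : Fin m → ℤ) (fun _ ↦ blowupWidth k t 0) = {0} := by
      simp [blowupWidth, ← Pi.zero_def]
    rw [hIcc, blowup_zero]
  | succ r ih =>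
    intro x hx
    obtain ⟨hx₀, hx₁⟩ := Finset.mem_Icc.1 hx
    choose v hv₀ hv₁ using fun j ↦ exists_digit (ht.trans htk) ht htk (hx₀ j) (hx₁ j)
    simp only [blowup_succ, Finset.mem_biUnion, Finset.mem_univ, true_and, Finset.mem_vadd_finset]
    exact ⟨v, _, ih (Finset.mem_Icc.2 ⟨hv₀, hv₁⟩), funext fun j ↦ add_sub_cancel _ _⟩

lemma vadd_blowup_succ (b : Fin m → ℤ) : b +ᵥ blowup m k t (r + 1) =
    Finset.univ.biUnion fun v : Fin m → Fin k ↦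
      (b + fun j ↦ (t : ℤ) ^ r * (v j : ℤ)) +ᵥ blowup m k t r := by
  simp only [blowup_succ, ← vadd_vadd]
  exact Finset.biUnion_image

lemma pairwise_disjoint_vadd_blowup (hkt : k ≤ t) (b : Fin m → ℤ) :
    Pairwise (Function.onFun Disjoint fun v : Fin m → Fin k ↦
      (b + fun j ↦ (t : ℤ) ^ r * (v j : ℤ)) +ᵥ blowup m k t r) := by
  refine fun v w hvw ↦ Finset.disjoint_left.2 fun x hv hw ↦ hvw (funext fun j ↦ Fin.ext ?_)
  have digit_eq {u : Fin m → Fin k} (hu : x ∈ (b + fun j ↦ (t : ℤ) ^ r * (u j : ℤ)) +ᵥ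
      blowup m k t r) : (x j - b j) / t ^ r = (u j : ℕ) := by
    obtain ⟨y, hy, rfl⟩ := Finset.mem_vadd_finset.1 hu
    obtain ⟨hy₀, hy₁⟩ := Finset.mem_Icc.1 (blowup_subset_Icc hy)
    have hlt : y j < t ^ r := (hy₁ j).trans_lt (blowupWidth_lt_pow hkt)
    simp only [vadd_eq_add, Pi.add_apply, add_assoc, add_sub_cancel_left]
    rw [add_comm, Int.add_mul_ediv_left _ _ ((hy₀ j).trans_lt hlt).ne',
      Int.ediv_eq_zero_of_lt (hy₀ j) hlt, zero_add]
  exact mod_cast (digit_eq hv).symm.trans (digit_eq hw)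

end Blowup

section LatticeBox

variable {ι : Type*} [Fintype ι] [DecidableEq ι] {a : ι → ℝ} {ℓ c : ℝ} {x : ι → ℤ} {k t : ℕ}

/-- The integer points of the half-open cube `∏ⱼ [aⱼ, aⱼ + ℓ)`. -/
noncomputable def latticeBox (a : ι → ℝ) (ℓ : ℝ) : Finset (ι → ℤ) :=
  Fintype.piFinset fun j ↦ Finset.Ico ⌈a j⌉ ⌈a j + ℓ⌉

lemma mem_latticeBox : x ∈ latticeBox a ℓ ↔ ∀ j, a j ≤ x j ∧ (x j : ℝ) < a j + ℓ := by
  simp only [latticeBox, Fintype.mem_piFinset, Finset.mem_Ico, Int.ceil_le, Int.lt_ceil]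

lemma mem_latticeBox_add_mul (hℓ : 0 < ℓ) {w : ι → ℤ} :
    x ∈ latticeBox (fun j ↦ a j + w j * ℓ) ℓ ↔ ∀ j, ⌊(x j - a j) / ℓ⌋ = w j := by
  simp only [mem_latticeBox, Int.floor_eq_iff, le_div_iff₀ hℓ, div_lt_iff₀ hℓ]
  refine forall_congr' fun j ↦ and_congr ?_ ?_ <;> constructor <;> intro h <;> linarith

lemma pairwise_disjoint_latticeBox (hℓ : 0 < ℓ) :
    Pairwise (Function.onFun Disjoint fun w : ι → Fin t ↦
      latticeBox (fun j ↦ a j + (w j : ℤ) * ℓ) ℓ) := by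
  refine fun v w hvw ↦ Finset.disjoint_left.2 fun x hv hw ↦ hvw (funext fun j ↦ Fin.ext ?_)
  rw [mem_latticeBox_add_mul hℓ] at hv hw
  exact mod_cast (hv j).symm.trans (hw j)

lemma latticeBox_mul_eq_biUnion (hℓ : 0 < ℓ) : latticeBox a (t * ℓ) =
    Finset.univ.biUnion fun w : ι → Fin t ↦ latticeBox (fun j ↦ a j + (w j : ℤ) * ℓ) ℓ := by
  ext x
  simp only [Finset.mem_biUnion, Finset.mem_univ, true_and, mem_latticeBox_add_mul hℓ]
  rw [mem_latticeBox]
  constructor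
  · intro hx
    have hfloor (j) : 0 ≤ ⌊(x j - a j) / ℓ⌋ ∧ ⌊(x j - a j) / ℓ⌋ < t := by
      rw [Int.floor_nonneg, Int.floor_lt, Int.cast_natCast, div_lt_iff₀ hℓ]
      exact ⟨div_nonneg (sub_nonneg.2 (hx j).1) hℓ.le, by linarith [(hx j).2]⟩
    refine ⟨fun j ↦ ⟨⌊(x j - a j) / ℓ⌋.toNat, by have := hfloor j; omega⟩, fun j ↦ ?_⟩
    exact (Int.toNat_of_nonneg (hfloor j).1).symm
  · rintro ⟨w, hw⟩ j
    obtain ⟨hle, hlt⟩ := Int.floor_eq_iff.1 (hw j)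
    rw [le_div_iff₀ hℓ] at hle
    rw [div_lt_iff₀ hℓ] at hlt
    have hw₀ : 0 ≤ ((w j : ℤ) : ℝ) * ℓ := by positivity
    have hw₁ : (((w j : ℤ) : ℝ) + 1) * ℓ ≤ t * ℓ := by
      gcongr
      exact mod_cast (w j).2
    constructor <;> linarith

lemma sub_one_lt_card_Ico_ceil : ℓ - 1 < (Finset.Ico ⌈c⌉ ⌈c + ℓ⌉).card := by
  have hcard : ⌈c + ℓ⌉ - ⌈c⌉ ≤ ((Finset.Ico ⌈c⌉ ⌈c + ℓ⌉).card : ℤ) := by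
    rw [Int.card_Ico]
    exact Int.self_le_toNat _
  have hcard' : (⌈c + ℓ⌉ : ℝ) - ⌈c⌉ ≤ (Finset.Ico ⌈c⌉ ⌈c + ℓ⌉).card := mod_cast hcard
  linarith [Int.le_ceil (c + ℓ), Int.ceil_lt_add_one c]

lemma card_Ico_ceil_lt_add_one (hℓ : 0 ≤ ℓ) : ((Finset.Ico ⌈c⌉ ⌈c + ℓ⌉).card : ℝ) < ℓ + 1 := by
  have hle : ⌈c⌉ ≤ ⌈c + ℓ⌉ := Int.ceil_le_ceil (by linarith)
  rw [← Int.cast_natCast, Int.card_Ico_of_le _ _ hle, Int.cast_sub]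
  linarith [Int.ceil_lt_add_one (c + ℓ), Int.le_ceil c]

lemma card_Ico_ceil_mul_le (htk : t < k) (hkℓ : (k : ℝ) ≤ ℓ) (c c' : ℝ) :
    (Finset.Ico ⌈c⌉ ⌈c + t * ℓ⌉).card ≤ k * (Finset.Ico ⌈c'⌉ ⌈c' + ℓ⌉).card := by
  have hℓ : 0 ≤ ℓ := k.cast_nonneg.trans hkℓ
  have hbig := card_Ico_ceil_lt_add_one (c := c) (mul_nonneg t.cast_nonneg hℓ)
  have hsmall := sub_one_lt_card_Ico_ceil (c := c') (ℓ := ℓ)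
  generalize (Finset.Ico ⌈c⌉ ⌈c + t * ℓ⌉).card = p at hbig ⊢
  generalize (Finset.Ico ⌈c'⌉ ⌈c' + ℓ⌉).card = q at hsmall ⊢
  have hkq : k ≤ q := Nat.lt_succ_iff.1 (by rify; linarith)
  have hpq : p ≤ t * (q + 1) := by
    rw [← Nat.lt_succ_iff]
    rify
    nlinarith [(t.cast_nonneg : (0 : ℝ) ≤ t)]
  nlinarith

lemma card_latticeBox_mul_le (htk : t < k) (hkℓ : (k : ℝ) ≤ ℓ) (a b : ι → ℝ) :
    (latticeBox a (t * ℓ)).card ≤ k ^ Fintype.card ι * (latticeBox b ℓ).card :=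
  card_piFinset_le_pow_mul fun j ↦ card_Ico_ceil_mul_le htk hkℓ (a j) (b j)

end LatticeBox

section Density

open scoped Pointwise

variable {m k t r : ℕ} {ε δ : ℝ} {X : Finset (Fin m → ℤ)}

lemma exists_disjoint_vadd_blowup (hm : 1 ≤ m) (hk : 1 ≤ k) (hkt : k ≤ t)
    (hε : √m * (k / t) ≤ ε) (hX : ¬ FinsetContainsCube ε m k X) (b : Fin m → ℤ) :
    ∃ v : Fin m → Fin k,
      Disjoint X ((b + fun j ↦ (t : ℤ) ^ r * (v j : ℤ)) +ᵥ blowup m k t r) := by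
  have ht : (0 : ℝ) < t := mod_cast hk.trans hkt
  refine exists_disjoint_of_not_containsCube (d := (t : ℝ) ^ r) (a := fun j ↦ b j) hm hε hX
    (by positivity) _ fun v x hx j ↦ ?_
  obtain ⟨y, hy, rfl⟩ := Finset.mem_vadd_finset.1 hx
  obtain ⟨hy₀, hy₁⟩ := Finset.mem_Icc.1 (blowup_subset_Icc hy)
  have hty : (t : ℤ) * y j < k * t ^ r :=
    (mul_le_mul_of_nonneg_left (hy₁ j) t.cast_nonneg).trans_lt (mul_blowupWidth_lt hk hkt)
  have hy₀' : (0 : ℝ) ≤ y j := mod_cast hy₀ j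
  simp only [vadd_eq_add, Pi.add_apply]
  push_cast
  rw [add_sub_cancel_left, abs_of_nonneg hy₀', div_mul_eq_mul_div, lt_div_iff₀ ht, mul_comm]
  exact mod_cast hty

lemma card_inter_vadd_blowup_le (hm : 1 ≤ m) (hk : 1 ≤ k) (hkt : k ≤ t)
    (hε : √m * (k / t) ≤ ε) (hX : ¬ FinsetContainsCube ε m k X) (b : Fin m → ℤ) :
    ((X ∩ (b +ᵥ blowup m k t r)).card : ℝ) ≤
      (((k : ℝ) ^ m - 1) / (k : ℝ) ^ m) ^ r * (b +ᵥ blowup m k t r).card := by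
  have hK : (1 : ℝ) ≤ (k : ℝ) ^ m := one_le_pow₀ (mod_cast hk)
  have hβ : 0 ≤ ((k : ℝ) ^ m - 1) / (k : ℝ) ^ m := div_nonneg (by linarith) (by linarith)
  induction r generalizing b with
  | zero =>
    rw [pow_zero, one_mul]
    exact mod_cast Finset.card_le_card Finset.inter_subset_right
  | succ r ih =>
    obtain ⟨v, hv⟩ := exists_disjoint_vadd_blowup (r := r) hm hk hkt hε hX b
    have hcard : (b +ᵥ blowup m k t (r + 1)).card ≤
        k ^ m * ((b + fun j ↦ (t : ℤ) ^ r * (v j : ℤ)) +ᵥ blowup m k t r).card := by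
      rw [vadd_blowup_succ]
      refine (Finset.card_biUnion_le_card_mul _ _ (blowup m k t r).card fun w _ ↦ ?_).trans ?_
      · exact (Finset.card_vadd_finset _ _).le
      · simp only [Finset.card_univ, Fintype.card_fun, Fintype.card_fin, Finset.card_vadd_finset,
          le_refl]
    rw [vadd_blowup_succ] at hcard ⊢
    rw [pow_succ]
    exact card_inter_biUnion_le ((pairwise_disjoint_vadd_blowup hkt b).set_pairwise _)
      (pow_nonneg hβ r) (by linarith) (fun w _ ↦ ih _) (Finset.mem_univ v) hv (mod_cast hcard)

lemma exists_disjoint_cell (hm : 1 ≤ m) (ht : 1 ≤ t) (hk : 1 ≤ k) (hε : √m * (k / t) ≤ ε)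
    (hX : ¬ FinsetContainsCube ε m k X) {ℓ : ℝ} (hℓ : 0 < ℓ) (a : Fin m → ℝ) :
    ∃ w : Fin m → Fin t, Disjoint X (latticeBox (fun j ↦ a j + (w j : ℤ) * ℓ) ℓ) := by
  have : (0 : ℝ) < k := mod_cast hk
  have : (0 : ℝ) < t := mod_cast ht
  have hcell (v : Fin k) : t * (v : ℕ) / k < t :=
    (Nat.div_lt_iff_lt_mul hk).2 (Nat.mul_lt_mul_of_pos_left v.2 ht)
  let cell (v : Fin m → Fin k) (j : Fin m) : Fin t := ⟨t * v j / k, hcell (v j)⟩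
  obtain ⟨v, hv⟩ := exists_disjoint_of_not_containsCube (d := t * ℓ / k) (a := a) hm hε hX
    (by positivity) (fun v ↦ latticeBox (fun j ↦ a j + (cell v j : ℤ) * ℓ) ℓ) fun v x hx j ↦ by
      obtain ⟨hx₀, hx₁⟩ := mem_latticeBox.1 hx j
      have hfloor : ((cell v j : ℤ) : ℝ) = ⌊(t * (v j : ℕ) : ℝ) / k⌋₊ := by
        rw [← Nat.cast_mul, Nat.floor_div_eq_div]
        rfl
      have hle := Nat.floor_le (a := (t * (v j : ℕ) : ℝ) / k) (by positivity)
      have hlt := Nat.lt_floor_add_one ((t * (v j : ℕ) : ℝ) / k)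
      rw [← hfloor] at hle hlt
      have hgrid : t * ℓ / k * (v j : ℕ) = (t * (v j : ℕ) : ℝ) / k * ℓ := by ring
      have htol : (k : ℝ) / t * (t * ℓ / k) = ℓ := by field_simp
      rw [htol, hgrid, abs_lt]
      constructor <;> nlinarith
  exact ⟨cell v, hv⟩

lemma card_inter_piFinset_Ico_le (hm : 1 ≤ m) (hk : 1 ≤ k) (hδ : √m * δ ≤ ε) (hδ₁ : 1 < δ)
    (hX : ¬ FinsetContainsCube ε m k X) {l u : Fin m → ℤ} (hlower : ∀ j, l j + k ≤ u j)
    (hupper : ∀ j, u j ≤ l j + 2 * k) :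
    ((X ∩ Fintype.piFinset fun j ↦ Finset.Ico (l j) (u j)).card : ℝ) ≤
      ((k : ℝ) ^ m - 1) / (k : ℝ) ^ m * (Fintype.piFinset fun j ↦ Finset.Ico (l j) (u j)).card := by
  -- Windows of side one if `u j - l j = k` and two otherwise: at least `(u j - l j) / k` each time.
  let W (v : Fin m → Fin k) : Finset (Fin m → ℤ) :=
    Fintype.piFinset fun j ↦ Finset.Ico (l j + v j) (min (l j + v j + 2) (u j))
  obtain ⟨v, hv⟩ := exists_disjoint_of_not_containsCube (d := 1) (a := fun j ↦ l j) hm hδ hX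
    one_pos W fun v x hx j ↦ by
      have hxj := Finset.mem_Ico.1 (Fintype.mem_piFinset.1 hx j)
      have hx₀ : (l j + (v j : ℕ) : ℝ) ≤ x j := mod_cast hxj.1
      have hx₁ : (x j : ℝ) ≤ l j + (v j : ℕ) + 1 := by
        have : x j ≤ l j + v j + 1 := by omega
        exact mod_cast this
      rw [abs_lt]
      constructor <;> linarith
  have hWsub : W v ⊆ Fintype.piFinset fun j ↦ Finset.Ico (l j) (u j) :=
    Fintype.piFinset_subset _ _ fun j ↦ Finset.Ico_subset_Ico (by omega) (min_le_right _ _)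
  have hWcard := card_piFinset_le_pow_mul (k := k) (f := fun j ↦ Finset.Ico (l j) (u j))
    (g := fun j ↦ Finset.Ico (l j + v j) (min (l j + v j + 2) (u j))) fun j ↦ by
      simp only [Int.card_Ico]
      rcases (hlower j).eq_or_lt with heq | hlt
      · calc (u j - l j).toNat = k * 1 := by omega
          _ ≤ _ := Nat.mul_le_mul_left k (by omega)
      · calc (u j - l j).toNat ≤ k * 2 := by have := hupper j; omega
          _ ≤ _ := Nat.mul_le_mul_left k (by omega)
  rw [Fintype.card_fin] at hWcard
  refine le_trans (mod_cast Finset.card_le_card fun x hx ↦ ?_)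
    (card_sdiff_le_mul_card (W := W v) (by positivity) hWsub (mod_cast hWcard))
  obtain ⟨hxX, hxS⟩ := Finset.mem_inter.1 hx
  exact Finset.mem_sdiff.2 ⟨hxS, Finset.disjoint_left.1 hv hxX⟩

lemma card_inter_latticeBox_le (hm : 1 ≤ m) (ht : 1 ≤ t) (htk : t < k) (hε : √m * (k / t) ≤ ε)
    (hX : ¬ FinsetContainsCube ε m k X) {ℓ : ℝ} (a : Fin m → ℝ) (hlower : k * (t : ℝ) ^ r ≤ ℓ)
    (hupper : ℓ ≤ 2 * k * (t : ℝ) ^ r) :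
    ((X ∩ latticeBox a ℓ).card : ℝ) ≤
      (((k : ℝ) ^ m - 1) / (k : ℝ) ^ m) ^ (r + 1) * (latticeBox a ℓ).card := by
  have hk : 1 ≤ k := ht.trans htk.le
  have ht' : (0 : ℝ) < t := mod_cast ht
  have hK : (1 : ℝ) ≤ (k : ℝ) ^ m := one_le_pow₀ (mod_cast hk)
  have hβ : 0 ≤ ((k : ℝ) ^ m - 1) / (k : ℝ) ^ m := div_nonneg (by linarith) (by linarith)
  induction r generalizing a ℓ with
  | zero =>
    rw [pow_zero, mul_one] at hlower hupper
    have hδ : 1 < (k : ℝ) / t := (one_lt_div ht').2 (mod_cast htk)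
    rw [zero_add, pow_one]
    refine card_inter_piFinset_Ico_le hm hk hε hδ hX (fun j ↦ ?_) (fun j ↦ ?_)
    · rw [← Int.ceil_add_natCast]
      exact Int.ceil_le_ceil (by linarith)
    · rw [← Nat.cast_ofNat, ← Nat.cast_mul, ← Int.ceil_add_natCast]
      exact Int.ceil_le_ceil (by push_cast; linarith)
  | succ r ih =>
    obtain ⟨ℓ, rfl⟩ : ∃ ℓ', ℓ = t * ℓ' := ⟨ℓ / t, by field_simp⟩
    rw [pow_succ', mul_left_comm, mul_le_mul_iff_right₀ ht'] at hlower hupper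
    have hkℓ : (k : ℝ) ≤ ℓ :=
      (le_mul_of_one_le_right k.cast_nonneg (one_le_pow₀ (mod_cast ht))).trans hlower
    have hℓ : 0 < ℓ := lt_of_lt_of_le (mod_cast hk) hkℓ
    obtain ⟨w, hw⟩ := exists_disjoint_cell hm ht hk hε hX hℓ a
    have hcard := card_latticeBox_mul_le htk hkℓ a fun j ↦ a j + (w j : ℤ) * ℓ
    rw [Fintype.card_fin] at hcard
    rw [latticeBox_mul_eq_biUnion hℓ] at hcard ⊢
    rw [pow_succ]
    exact card_inter_biUnion_le ((pairwise_disjoint_latticeBox hℓ).set_pairwise _)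
      (pow_nonneg hβ _) (by linarith) (fun v _ ↦ ih _ hlower hupper) (Finset.mem_univ w) hw
      (mod_cast hcard)

lemma blowup_eq_latticeBox (ht : 1 ≤ t) (htk : t ≤ k) :
    blowup m k t r = latticeBox 0 (blowupWidth k t r + 1) := by
  ext x
  simp only [blowup_eq_Icc ht htk, Finset.mem_Icc, mem_latticeBox, Pi.le_def, Pi.zero_apply,
    zero_add, ← forall_and]
  refine forall_congr' fun j ↦ and_congr (by norm_cast) ?_
  rw [← Int.lt_add_one_iff]
  norm_cast

lemma card_inter_blowup_le_of_lt (hm : 1 ≤ m) (ht : 2 ≤ t) (htk : t < k) (hε : √m * (k / t) ≤ ε)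
    (hX : ¬ FinsetContainsCube ε m k X) :
    ((X ∩ blowup m k t r).card : ℝ) ≤
      (((k : ℝ) ^ m - 1) / (k : ℝ) ^ m) ^ r * (blowup m k t r).card := by
  cases r with
  | zero =>
    rw [pow_zero, one_mul]
    exact mod_cast Finset.card_le_card Finset.inter_subset_right
  | succ r =>
    rw [blowup_eq_latticeBox (by omega) htk.le]
    refine card_inter_latticeBox_le hm (by omega) htk hε hX 0 ?_ ?_
    · exact mod_cast mul_pow_le_blowupWidth_succ htk.le
    · exact mod_cast blowupWidth_succ_add_one_le (by omega) ht

lemma card_inter_blowup_le (hm : 1 ≤ m) (hk : 1 ≤ k) (ht : 1 ≤ t) (hε : √m * (k / t) ≤ ε)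
    (hX : ¬ FinsetContainsCube ε m k X) :
    ((X ∩ blowup m k t r).card : ℝ) ≤
      (((k : ℝ) ^ m - 1) / (k : ℝ) ^ m) ^ r * (blowup m k t r).card := by
  rcases le_or_gt k t with hkt | htk
  · simpa only [zero_vadd] using card_inter_vadd_blowup_le (r := r) hm hk hkt hε hX 0
  rcases ht.eq_or_lt with rfl | ht
  · obtain rfl : X = ∅ := by
      by_contra hne
      refine hX (containsCube_of_nonempty hm ?_ (Finset.nonempty_iff_ne_empty.2 hne))
      simpa using hε
    have hK : (1 : ℝ) ≤ (k : ℝ) ^ m := one_le_pow₀ (mod_cast hk)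
    rw [Finset.empty_inter, Finset.card_empty, Nat.cast_zero]
    exact mul_nonneg (pow_nonneg (div_nonneg (by linarith) (by linarith)) r) (Nat.cast_nonneg _)
  · exact card_inter_blowup_le_of_lt hm ht htk hε hX

end Density

theorem iterated_blowup_dense_subsets_general (m k r : ℕ) (hm : 1 ≤ m) (hk : 1 ≤ k)
    (ε : ℝ) (hε : 0 < ε) (t : ℕ) (ht : (k : ℝ) * Real.sqrt m / ε ≤ (t : ℝ))
    (X : Finset (Fin m → ℤ)) (hX : X ⊆ blowup m k t r)
    (hXcard : (((k : ℝ) ^ m - 1) / (k : ℝ) ^ m) ^ r * ((blowup m k t r).card : ℝ) < X.card) :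
    FinsetContainsCube ε m k X := by
  have ht₀ : (0 : ℝ) < t := lt_of_lt_of_le (by positivity) ht
  have hδ : √m * (k / t) ≤ ε := by
    rw [div_le_iff₀ hε] at ht
    rw [← mul_div_assoc, div_le_iff₀ ht₀]
    linarith
  by_contra hcube
  have hbound := card_inter_blowup_le (r := r) hm hk (mod_cast ht₀) hδ hcube
  rw [Finset.inter_eq_left.2 hX] at hbound
  exact hbound.not_gt hXcard

theorem iterated_blowup_dense_subsets (m k r : ℕ) (hm : 1 ≤ m) (hk : 3 ≤ k) (hr : 1 ≤ r)
    (ε : ℝ) (hε : 0 < ε) (t : ℕ) (ht : (k : ℝ) * Real.sqrt m / ε ≤ (t : ℝ))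
    (A : Finset (Fin m → ℤ))
    (hA : A = Finset.image
      (fun v : Fin r → Fin m → Fin k => fun j : Fin m => ∑ i : Fin r, (t : ℤ) ^ (i : ℕ) * (v i j : ℤ))
      Finset.univ)
    (α : ℝ) (hα0 : 0 < α) (hα1 : α < 1)
    (hα : (((k : ℝ) ^ m - 1) / (k : ℝ) ^ m) ^ r < α)
    (X : Finset (Fin m → ℤ)) (hX : X ⊆ A)
    (hXcard : α * (A.card : ℝ) ≤ (X.card : ℝ)) :
    FinsetContainsCube ε m k X := by
  subst hA
  have hA : 0 < ((blowup m k t r).card : ℝ) := mod_cast (blowup_nonempty (by omega)).card_pos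
  exact iterated_blowup_dense_subsets_general m k r hm (by omega) ε hε t ht X hX
    ((mul_lt_mul_of_pos_right hα hA).trans_le hXcard)
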